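/- Let L ∈ ℝ^{n,n} be invertible, γ ≥ 0, and let H : ℝ^{n,k} → ℝ^{n,n} be the Kohn–Sham matrix function H(V) = L + Diag(L^{−1} ρ(V) − γ ρ(V)^{1/3}). For every V ∈ ℝ^{n,k} with no zero row, H is Fréchet differentiable at V with derivative L_H(V,E) = 2 Diag( L^{−1} diag(V E^T) − (γ/3)( ρ(V)^{−2/3} ⊙ diag(V E^T) ) ) for all E ∈ ℝ^{n,k}. -/

import Mathlib

open Matrix

attribute [local instance] Matrix.frobeniusNormedAddCommGroup Matrix.frobeniusNormedSpace

/-! The density `ρ(V) = diag(V Vᵀ)` is the quadratic form of the symmetric bilinear map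
`(V, E) ↦ diag(V Eᵀ)`, so its derivative is `E ↦ 2 diag(V Eᵀ)`. The Kohn–Sham function is an affine
function of `ρ` and of an entrywise power of `ρ`, and the entries of `ρ(V)` are the squared
Euclidean norms of the rows of `V`. Nonzero rows keep them away from `0`, where the power `1/3`
is not differentiable, so the chain rule applies. -/

section Density

variable {m n : Type*} [Fintype n]

theorem diag_mul_transpose_comm {R : Type*} [NonUnitalCommSemiring R] (V E : Matrix m n R) :
    (V * Eᵀ).diag = (E * Vᵀ).diag := by
  rw [← diag_transpose, transpose_mul, transpose_transpose]

theorem diag_mul_transpose_self_ne_zero {R : Type*} [Ring R] [LinearOrder R] [IsStrictOrderedRing R]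
    {V : Matrix m n R} {i : m} (hi : V i ≠ 0) : (V * Vᵀ).diag i ≠ 0 :=
  mt dotProduct_self_eq_zero.mp hi

variable [Fintype m] {𝕜 : Type*} [NontriviallyNormedField 𝕜] [CompleteSpace 𝕜]

variable (m n 𝕜) in
/-- The continuous bilinear map `(V, E) ↦ diag(V Eᵀ)`, the polarization of the density
`ρ(V) = diag(V Vᵀ)`. It is bundled so that derivatives of `ρ` can be expressed through it. -/
noncomputable def diagMulTransposeCLM : Matrix m n 𝕜 →L[𝕜] Matrix m n 𝕜 →L[𝕜] (m → 𝕜) :=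
  (LinearMap.mk₂ 𝕜 (fun V E : Matrix m n 𝕜 => (V * Eᵀ).diag)
    (fun V W E => by rw [Matrix.add_mul, diag_add])
    (fun c V E => by rw [Matrix.smul_mul, diag_smul])
    (fun V E F => by rw [transpose_add, Matrix.mul_add, diag_add])
    (fun c V E => by rw [transpose_smul, Matrix.mul_smul, diag_smul])).toContinuousBilinearMap

@[simp]
theorem diagMulTransposeCLM_apply (V E : Matrix m n 𝕜) :
    diagMulTransposeCLM m n 𝕜 V E = (V * Eᵀ).diag :=
  rfl

theorem hasFDerivAt_diag_mul_transpose_self (V : Matrix m n 𝕜) :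
    HasFDerivAt (fun W : Matrix m n 𝕜 => (W * Wᵀ).diag)
      ((2 : 𝕜) • diagMulTransposeCLM m n 𝕜 V) V := by
  have product_rule := (diagMulTransposeCLM m n 𝕜).hasFDerivAt_of_bilinear
    (hasFDerivAt_id V) (hasFDerivAt_id V)
  refine product_rule.congr_fderiv (ContinuousLinearMap.ext fun E => ?_)
  change diagMulTransposeCLM m n 𝕜 V E + diagMulTransposeCLM m n 𝕜 E V =
    (2 : 𝕜) • diagMulTransposeCLM m n 𝕜 V E
  rw [diagMulTransposeCLM_apply V E, diagMulTransposeCLM_apply E V,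
    diag_mul_transpose_comm E V, two_smul]

end Density

section EntrywiseMaps

variable {ι : Type*} [Finite ι]

theorem hasFDerivAt_piMap {𝕜 : Type*} [NontriviallyNormedField 𝕜] {E F : ι → Type*}
    [∀ i, NormedAddCommGroup (E i)] [∀ i, NormedSpace 𝕜 (E i)]
    [∀ i, NormedAddCommGroup (F i)] [∀ i, NormedSpace 𝕜 (F i)]
    {f : ∀ i, E i → F i} {f' : ∀ i, E i →L[𝕜] F i} {x : ∀ i, E i}
    (hf : ∀ i, HasFDerivAt (f i) (f' i) (x i)) :
    HasFDerivAt (Pi.map f) (ContinuousLinearMap.piMap f') x := by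
  have := Fintype.ofFinite ι
  exact hasFDerivAt_pi'' fun i => (hf i).comp x (hasFDerivAt_apply i x)

theorem hasFDerivAt_pi_rpow_const {x : ι → ℝ} {p : ℝ} (h : ∀ i, x i ≠ 0 ∨ 1 ≤ p) :
    HasFDerivAt (fun (y : ι → ℝ) i => y i ^ p)
      (ContinuousLinearMap.piMap fun i =>
        ContinuousLinearMap.toSpanSingleton ℝ (p * x i ^ (p - 1))) x :=
  hasFDerivAt_piMap fun i => (Real.hasDerivAt_rpow_const (h i)).hasFDerivAt

end EntrywiseMaps

theorem frechet_deriv_kohn_sham_general {m n : Type*} [Fintype m] [DecidableEq m] [Fintype n]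
    (L A : Matrix m m ℝ) (γ p : ℝ) (V : Matrix m n ℝ) (hV : ∀ i, V i ≠ 0 ∨ 1 ≤ p) :
    ∃ LH : Matrix m n ℝ →L[ℝ] Matrix m m ℝ,
      HasFDerivAt
        (fun W : Matrix m n ℝ =>
          L + diagonal (A *ᵥ (W * Wᵀ).diag - γ • fun i => (W * Wᵀ).diag i ^ p))
        LH V ∧
      ∀ E : Matrix m n ℝ,
        LH E = (2 : ℝ) • diagonal
          (A *ᵥ (V * Eᵀ).diag -
            (γ * p) • fun i => (V * Vᵀ).diag i ^ (p - 1) * (V * Eᵀ).diag i) := by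
  have density := hasFDerivAt_diag_mul_transpose_self V
  have linear_term := A.mulVecLin.toContinuousLinearMap.hasFDerivAt.comp V density
  have power_term := (hasFDerivAt_pi_rpow_const fun i =>
    (hV i).imp_left diag_mul_transpose_self_ne_zero).comp V density
  have potential := linear_term.sub (power_term.const_smul γ)
  refine ⟨_, ((diagonalLinearMap m ℝ ℝ).toContinuousLinearMap.hasFDerivAt.comp V
    potential).const_add L, fun E => ?_⟩
  change diagonal (A *ᵥ ((2 : ℝ) • (V * Eᵀ).diag) -
    γ • fun i => (2 * (V * Eᵀ).diag i) * (p * (V * Vᵀ).diag i ^ (p - 1))) = _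
  rw [mulVec_smul, ← diagonal_smul, smul_sub]
  congr 2
  funext i
  simp only [Pi.smul_apply, smul_eq_mul]
  ring

/-- The Kohn–Sham matrix function `H(V) = L + Diag(L⁻¹ ρ(V) − γ ρ(V)^(1/3))`, with
`ρ(V) = diag(V Vᵀ)` and `L` invertible, is Fréchet differentiable at every `V` with no zero
row, with derivative `E ↦ 2 Diag(L⁻¹ diag(V Eᵀ) − (γ/3)(ρ(V)^(−2/3) ⊙ diag(V Eᵀ)))`. -/
theorem frechet_deriv_kohn_sham {n k : ℕ}
    (L : Matrix (Fin n) (Fin n) ℝ) (hL : IsUnit L.det)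
    (γ : ℝ) (hγ : 0 ≤ γ)
    (V : Matrix (Fin n) (Fin k) ℝ) (hV : ∀ i : Fin n, V i ≠ 0) :
    ∃ LH : Matrix (Fin n) (Fin k) ℝ →L[ℝ] Matrix (Fin n) (Fin n) ℝ,
      HasFDerivAt
        (fun W : Matrix (Fin n) (Fin k) ℝ =>
          L + Matrix.diagonal
            (L⁻¹ *ᵥ (W * Wᵀ).diag - γ • fun i : Fin n => (W * Wᵀ).diag i ^ ((1 : ℝ) / 3)))
        LH V ∧
      ∀ E : Matrix (Fin n) (Fin k) ℝ,
        LH E = (2 : ℝ) • Matrix.diagonal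
          (L⁻¹ *ᵥ (V * Eᵀ).diag -
            (γ / 3) • fun i : Fin n =>
              (V * Vᵀ).diag i ^ (-(2 : ℝ) / 3) * (V * Eᵀ).diag i) := by
  obtain ⟨LH, hLH, hE⟩ := frechet_deriv_kohn_sham_general L L⁻¹ γ (1 / 3) V fun i => .inl (hV i)
  exact ⟨LH, hLH, fun E => by rw [hE E, mul_one_div, show (1 : ℝ) / 3 - 1 = -2 / 3 by norm_num]⟩
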